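/- arXiv:1203.6383 — 6 statements merged into one kernel-verified Lean document; each statement's English description precedes it below -/
import Mathlib

section
/- Let p be an odd prime, n = 3, and P := x_1 • (y_2·y_3) − x_2 • (y_1·y_3) + x_3 • (y_1·y_2) ∈ Λ. Then for every a = (a_1,a_2,a_3) ∈ (ℤ/p)^3, φ_a(P) = P + T_a · z, where T_a := a_1 • (x_2 • y_3 − x_3 • y_2) + a_2 • (x_3 • y_1 − x_1 • y_3) + a_3 • (x_1 • y_2 − x_2 • y_1) ∈ Λ; that is, the inverse transgression of P at a equals a_1(x_2 y_3 − x_3 y_2) + a_2(x_3 y_1 − x_1 y_3) + a_3(x_1 y_2 − x_2 y_1). -/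
/-!
Algebraic model of the inverse transgression map for `G = (ℤ/p)^n`.

`R p n = 𝔽_p[x_1, …, x_n]`, `Λ p n` is the exterior algebra over `R p n` on the free
module `Fin (n+1) → R p n` with standard basis `e_0, …, e_n`; `y p n i = ι e_i`
(modelling `y_{i+1}`) and `z p n = ι e_n`.  `φ p n a` is the algebra map induced by
`e_i ↦ e_i + a_{i+1} e_n` (for `i < n`) and `e_n ↦ 0`.
-/

noncomputable section

open ExteriorAlgebra

abbrev R (p n : ℕ) : Type := MvPolynomial (Fin n) (ZMod p)

abbrev Λ (p n : ℕ) : Type := ExteriorAlgebra (R p n) (Fin (n + 1) → R p n)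

/-- The class `y_{i+1}`, i.e. `ι e_i` for `i = 0, …, n-1`. -/
def y (p n : ℕ) (i : Fin n) : Λ p n :=
  ExteriorAlgebra.ι (R p n) (Pi.single i.castSucc 1)

/-- The extra exterior generator `z = ι e_n`. -/
def z (p n : ℕ) : Λ p n :=
  ExteriorAlgebra.ι (R p n) (Pi.single (Fin.last n) 1)

/-- The linear endomorphism `e_i ↦ e_i + a_{i+1} • e_n` (`i < n`), `e_n ↦ 0`. -/
def f (p n : ℕ) (a : Fin n → ZMod p) :
    (Fin (n + 1) → R p n) →ₗ[R p n] (Fin (n + 1) → R p n) :=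
  ∑ i : Fin n,
    LinearMap.smulRight (LinearMap.proj i.castSucc)
      ((Pi.single i.castSucc 1 : Fin (n + 1) → R p n) +
        algebraMap (ZMod p) (R p n) (a i) • (Pi.single (Fin.last n) 1 : Fin (n + 1) → R p n))

/-- The algebraic inverse-transgression substitution `φ_a`. -/
def φ (p n : ℕ) (a : Fin n → ZMod p) : Λ p n →ₐ[R p n] Λ p n :=
  ExteriorAlgebra.map (f p n a)

/-- The degree-4 class `P = x_1 y_2 y_3 - x_2 y_1 y_3 + x_3 y_1 y_2` for `n = 3`. -/
def P (p : ℕ) : Λ p 3 :=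
  (MvPolynomial.X 0 : R p 3) • (y p 3 1 * y p 3 2)
    - (MvPolynomial.X 1 : R p 3) • (y p 3 0 * y p 3 2)
    + (MvPolynomial.X 2 : R p 3) • (y p 3 0 * y p 3 1)

/-- The inverse transgression
`T_a = a_1 (x_2 y_3 - x_3 y_2) + a_2 (x_3 y_1 - x_1 y_3) + a_3 (x_1 y_2 - x_2 y_1)`
of `P` at `a`. -/
def T (p : ℕ) (a : Fin 3 → ZMod p) : Λ p 3 :=
  algebraMap (ZMod p) (R p 3) (a 0) •
      ((MvPolynomial.X 1 : R p 3) • y p 3 2 - (MvPolynomial.X 2 : R p 3) • y p 3 1)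
    + algebraMap (ZMod p) (R p 3) (a 1) •
      ((MvPolynomial.X 2 : R p 3) • y p 3 0 - (MvPolynomial.X 0 : R p 3) • y p 3 2)
    + algebraMap (ZMod p) (R p 3) (a 2) •
      ((MvPolynomial.X 0 : R p 3) • y p 3 1 - (MvPolynomial.X 1 : R p 3) • y p 3 0)

theorem phi_y (p n : ℕ) (a : Fin n → ZMod p) (i : Fin n) :
    φ p n a (y p n i) = y p n i + algebraMap (ZMod p) (R p n) (a i) • z p n := by
  have hf : f p n a (Pi.single i.castSucc 1) =
      (Pi.single i.castSucc 1 : Fin (n + 1) → R p n) +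
        algebraMap (ZMod p) (R p n) (a i) • (Pi.single (Fin.last n) 1 : Fin (n + 1) → R p n) := by
    unfold f
    rw [LinearMap.sum_apply, Finset.sum_eq_single i]
    · simp only [LinearMap.smulRight_apply, LinearMap.proj_apply, Pi.single_eq_same, one_smul]
    · intro b _ hb
      have hne : b.castSucc ≠ i.castSucc := fun h => hb (Fin.castSucc_injective n h)
      simp only [LinearMap.smulRight_apply, LinearMap.proj_apply, Pi.single_eq_of_ne hne, zero_smul]
    · intro h
      exact absurd (Finset.mem_univ i) h
  unfold φ y z
  rw [ExteriorAlgebra.map_apply_ι, hf, map_add, map_smul]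

theorem z_mul_z (p n : ℕ) : z p n * z p n = 0 := ExteriorAlgebra.ι_sq_zero _

theorem z_mul_y (p n : ℕ) (i : Fin n) : z p n * y p n i = -(y p n i * z p n) :=
  eq_neg_of_add_eq_zero_left (ExteriorAlgebra.ι_add_mul_swap _ _)

theorem phi_yy (p n : ℕ) (a : Fin n → ZMod p) (i j : Fin n) :
    φ p n a (y p n i * y p n j) = y p n i * y p n j +
      (algebraMap (ZMod p) (R p n) (a j) • (y p n i * z p n)
        - algebraMap (ZMod p) (R p n) (a i) • (y p n j * z p n)) := by
  rw [map_mul, phi_y, phi_y, add_mul, mul_add, mul_add, smul_mul_assoc, smul_mul_assoc,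
    mul_smul_comm, mul_smul_comm, z_mul_z, z_mul_y, smul_zero, smul_zero, smul_neg]
  abel

/-- For `n = 3` and `P = x_1 y_2 y_3 - x_2 y_1 y_3 + x_3 y_1 y_2`, the inverse
transgression of `P` at `a = (a_1, a_2, a_3)` is
`a_1 (x_2 y_3 - x_3 y_2) + a_2 (x_3 y_1 - x_1 y_3) + a_3 (x_1 y_2 - x_2 y_1)`,
i.e. `φ_a P = P + T_a z`. -/
theorem statement1 (p : ℕ) (hp : p.Prime) (hodd : Odd p) (a : Fin 3 → ZMod p) :
    φ p 3 a (P p) = P p + T p a * z p 3 := by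
  unfold P T
  rw [map_add, map_sub, map_smul, map_smul, map_smul, phi_yy, phi_yy, phi_yy]
  simp only [add_mul, sub_mul, smul_mul_assoc]
  module

end
end

section
/- Let p be an odd prime and n ≥ 3, and let i, j, k be pairwise distinct indices with 1 ≤ i, j, k ≤ n. Set P := x_i • (y_j·y_k) − x_j • (y_i·y_k) + x_k • (y_i·y_j) ∈ Λ. Then there exists a ∈ (ℤ/p)^n such that φ_a(P) ≠ P; that is, the inverse transgression map at some group element a of (ℤ/p)^n is nonzero on P, so for n ≥ 3 the inverse transgression map of (ℤ/p)^n is nontrivial. -/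
/-!
Algebraic model of the inverse transgression map for `G = (ℤ/p)^n`.

`R p n = 𝔽_p[x_1, …, x_n]`, `Λ p n` is the exterior algebra over `R p n` on the free
module `Fin (n+1) → R p n` with standard basis `e_0, …, e_n`; `y p n i = ι e_i`
(modelling `y_{i+1}`) and `z p n = ι e_n`.  `φ p n a` is the algebra map induced by
`e_i ↦ e_i + a_{i+1} e_n` (for `i < n`) and `e_n ↦ 0`.
-/

noncomputable section

open ExteriorAlgebra

theorem exists_minor {A : Type*} [CommRing A] {m : ℕ} (c d : Fin m) :
    ∃ D : ExteriorAlgebra A (Fin m → A) →ₗ[A] A, ∀ u v : Fin m → A,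
      D (ExteriorAlgebra.ι A u * ExteriorAlgebra.ι A v) = u c * v d - u d * v c := by
  let g : ∀ i, (Fin m → A) [⋀^Fin i]→ₗ[A] A := fun i => match i with
    | 2 => (Matrix.detRowAlternating (R := A) (n := Fin 2)).compLinearMap
        (LinearMap.pi ![LinearMap.proj c, LinearMap.proj d])
    | _ => 0
  refine ⟨ExteriorAlgebra.liftAlternating g, fun u v => ?_⟩
  have h := ExteriorAlgebra.liftAlternating_apply_ιMulti g ![u, v]
  have e : ExteriorAlgebra.ιMulti A 2 ![u, v] = ExteriorAlgebra.ι A u * ExteriorAlgebra.ι A v := by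
    simp [ExteriorAlgebra.ιMulti_apply]
  rw [e] at h
  rw [h]
  change Matrix.det (Matrix.of fun i => (LinearMap.pi ![LinearMap.proj c, LinearMap.proj d] :
    (Fin m → A) →ₗ[A] (Fin 2 → A)) (![u, v] i)) = _
  rw [Matrix.det_fin_two]
  simp

theorem f_single (p n : ℕ) (a : Fin n → ZMod p) (i : Fin n) :
    f p n a (Pi.single i.castSucc 1) = Pi.single i.castSucc 1 +
      algebraMap (ZMod p) (R p n) (a i) • (Pi.single (Fin.last n) 1 : Fin (n + 1) → R p n) := by
  unfold f
  rw [LinearMap.sum_apply, Finset.sum_eq_single i]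
  · simp
  · intro b _ hb
    have : b.castSucc ≠ i.castSucc := fun h => hb (Fin.castSucc_injective _ h)
    simp [this]
  · simp

/-- For `n ≥ 3` and pairwise distinct indices `i, j, k`, the class
`P = x_i y_j y_k - x_j y_i y_k + x_k y_i y_j` has nontrivial inverse transgression:
there is some `a ∈ (ℤ/p)^n` with `φ_a P ≠ P`. -/
theorem statement4 (p : ℕ) (hp : p.Prime) (hodd : Odd p) (n : ℕ) (hn : 3 ≤ n)
    (i j k : Fin n) (hij : i ≠ j) (hik : i ≠ k) (hjk : j ≠ k) :
    ∃ a : Fin n → ZMod p,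
      φ p n a ((MvPolynomial.X i : R p n) • (y p n j * y p n k)
          - (MvPolynomial.X j : R p n) • (y p n i * y p n k)
          + (MvPolynomial.X k : R p n) • (y p n i * y p n j)) ≠
        (MvPolynomial.X i : R p n) • (y p n j * y p n k)
          - (MvPolynomial.X j : R p n) • (y p n i * y p n k)
          + (MvPolynomial.X k : R p n) • (y p n i * y p n j) := by
  haveI : Fact p.Prime := ⟨hp⟩
  refine ⟨Pi.single k 1, fun H => ?_⟩
  obtain ⟨D, hD⟩ := exists_minor (A := R p n) (j.castSucc) (Fin.last n)
  have H2 := congrArg D H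
  have hl : ∀ t : Fin n, Fin.last n ≠ t.castSucc := fun t => (Fin.castSucc_lt_last t).ne'
  have hl' : ∀ t : Fin n, t.castSucc ≠ Fin.last n := fun t => (Fin.castSucc_lt_last t).ne
  simp only [φ, y, map_add, map_sub, map_smul, map_mul, ExteriorAlgebra.map_apply_ι, f_single, hD]
    at H2
  simp [mul_add, hD, Pi.single_apply, hl, hl', hij, hik, hjk, hij.symm, hik.symm, hjk.symm] at H2

end
end

section
/- The function ω : G × G × G → ℂˣ defined by ω((ρ₁,x₁),(ρ₂,x₂),(ρ₃,x₃)) := ρ₁(k(x₂,x₃)) satisfies the 3-cocycle identity: for all a, b, c, d ∈ G, ω(b,c,d) · ω(a,bc,d) · ω(a,b,c) = ω(ab,c,d) · ω(a,b,cd). In particular ω is a 3-cocycle on the group G = K̂ × (H/K) with values in ℂˣ. -/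
/-- Let `H` be a finite group, `K ≤ Z(H)` a central (hence normal) subgroup,
`u : H ⧸ K → H` a set-theoretic section of the projection, and
`k(x, y) = u x · u y · u (x y)⁻¹ ∈ K`.  On the direct product group
`G = K̂ × (H ⧸ K)` (where `K̂ = K →* ℂˣ` is the character group of `K`), the function
`ω((ρ₁, x₁), (ρ₂, x₂), (ρ₃, x₃)) = ρ₁ (k (x₂, x₃))` satisfies the 3-cocycle identity
`ω(b,c,d) ω(a,bc,d) ω(a,b,c) = ω(ab,c,d) ω(a,b,cd)`; in particular `ω` is a
3-cocycle on `G` with values in `ℂˣ`. -/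
theorem statement5 {H : Type} [Group H] [Finite H] (K : Subgroup H) [K.Normal]
    (hK : K ≤ Subgroup.center H)
    (u : H ⧸ K → H) (hu : ∀ x : H ⧸ K, (QuotientGroup.mk (u x) : H ⧸ K) = x)
    (kf : H ⧸ K → H ⧸ K → K)
    (hkf : ∀ x y : H ⧸ K, (kf x y : H) = u x * u y * (u (x * y))⁻¹)
    (ω : (K →* ℂˣ) × (H ⧸ K) → (K →* ℂˣ) × (H ⧸ K) → (K →* ℂˣ) × (H ⧸ K) → ℂˣ)
    (hω : ∀ g₁ g₂ g₃ : (K →* ℂˣ) × (H ⧸ K), ω g₁ g₂ g₃ = g₁.1 (kf g₂.2 g₃.2)) :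
    ∀ a b c d : (K →* ℂˣ) × (H ⧸ K),
      ω b c d * ω a (b * c) d * ω a b c = ω (a * b) c d * ω a b (c * d) := by
  intro a b c d
  have key : ∀ x y z : H ⧸ K, kf x y * kf (x * y) z = kf y z * kf x (y * z) := by
    intro x y z
    apply Subtype.ext
    have hc : (kf y z : H) * u x = u x * (kf y z : H) :=
      ((Subgroup.mem_center_iff.mp (hK (kf y z).2)) (u x)).symm
    calc ((kf x y * kf (x * y) z : K) : H)
        = u x * u y * u z * (u (x * y * z))⁻¹ := by
          rw [Subgroup.coe_mul, hkf, hkf]; group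
      _ = u x * (kf y z : H) * u (y * z) * (u (x * (y * z)))⁻¹ := by
          rw [hkf y z, mul_assoc x y z]; group
      _ = ((kf y z * kf x (y * z) : K) : H) := by
          rw [← hc, Subgroup.coe_mul, hkf x (y * z)]; simp only [mul_assoc]
  have h := congrArg a.1 (key b.2 c.2 d.2)
  rw [map_mul, map_mul] at h
  simp only [hω, Prod.fst_mul, Prod.snd_mul, MonoidHom.mul_apply]
  rw [mul_assoc, mul_comm (a.1 (kf (b.2 * c.2) d.2)), h, ← mul_assoc,
    mul_comm (b.1 _) (a.1 _)]
end

section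
/- Assume in addition that p is an odd prime, n ≥ 1, H has order p^{2n+1} and exponent p (h^p = 1 for all h ∈ H), K = Z(H) is the center of H and has order p, and every commutator ⁅a,b⁆ (a,b ∈ H) lies in Z(H) (so H is an extra-special p-group of exponent p and H/K is elementary abelian). Then the 3-cocycle ω on G = K̂ × (H/K) defined by ω((ρ₁,x₁),(ρ₂,x₂),(ρ₃,x₃)) := ρ₁(k(x₂,x₃)) is not a coboundary: there is no function β : G × G → ℂˣ such that ω(a,b,c) = β(b,c) · β(a,bc) · β(ab,c)⁻¹ · β(a,b)⁻¹ for all a, b, c ∈ G. In particular ω represents a nontrivial class in H³(G; ℂˣ). -/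
open scoped commutatorElement

/-- Let `p` be an odd prime and `H` an extra-special group of order `p^(2n+1)` and
exponent `p`: the center `K = Z(H)` has order `p`, every commutator lies in `Z(H)`,
and `h ^ p = 1` for all `h`.  Let `u : H ⧸ K → H` be a section of the projection with
associated 2-cocycle `k(x, y) = u x · u y · u (x y)⁻¹ ∈ K`, and let
`ω((ρ₁,x₁),(ρ₂,x₂),(ρ₃,x₃)) = ρ₁ (k (x₂, x₃))` be the resulting 3-cocycle on the
group `G = K̂ × (H ⧸ K)`.  Then `ω` is not a coboundary: there is no
`β : G × G → ℂˣ` with `ω(a,b,c) = β(b,c) β(a,bc) β(ab,c)⁻¹ β(a,b)⁻¹` for all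
`a, b, c ∈ G`.  In particular `ω` represents a nontrivial class in `H³(G; ℂˣ)`. -/
theorem statement6 (p n : ℕ) (hp : p.Prime) (hodd : Odd p) (hn : 1 ≤ n)
    {H : Type} [Group H] [Finite H]
    (hcard : Nat.card H = p ^ (2 * n + 1))
    (hexp : ∀ h : H, h ^ p = 1)
    (hcenter : Nat.card (Subgroup.center H) = p)
    (hcomm : ∀ a b : H, ⁅a, b⁆ ∈ Subgroup.center H)
    (u : H ⧸ Subgroup.center H → H)
    (hu : ∀ x : H ⧸ Subgroup.center H,
      (QuotientGroup.mk (u x) : H ⧸ Subgroup.center H) = x)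
    (kf : H ⧸ Subgroup.center H → H ⧸ Subgroup.center H → Subgroup.center H)
    (hkf : ∀ x y : H ⧸ Subgroup.center H, (kf x y : H) = u x * u y * (u (x * y))⁻¹)
    (ω : (Subgroup.center H →* ℂˣ) × (H ⧸ Subgroup.center H) →
      (Subgroup.center H →* ℂˣ) × (H ⧸ Subgroup.center H) →
      (Subgroup.center H →* ℂˣ) × (H ⧸ Subgroup.center H) → ℂˣ)
    (hω : ∀ g₁ g₂ g₃ : (Subgroup.center H →* ℂˣ) × (H ⧸ Subgroup.center H),
      ω g₁ g₂ g₃ = g₁.1 (kf g₂.2 g₃.2)) :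
    ¬ ∃ β : (Subgroup.center H →* ℂˣ) × (H ⧸ Subgroup.center H) →
        (Subgroup.center H →* ℂˣ) × (H ⧸ Subgroup.center H) → ℂˣ,
      ∀ a b c : (Subgroup.center H →* ℂˣ) × (H ⧸ Subgroup.center H),
        ω a b c = β b c * β a (b * c) * (β (a * b) c)⁻¹ * (β a b)⁻¹ := by
  classical
  rintro ⟨β, hβ⟩
  -- the quotient is abelian
  have hcq : ∀ x y : H ⧸ Subgroup.center H, x * y = y * x := by
    intro x y
    obtain ⟨a, rfl⟩ := QuotientGroup.mk_surjective x
    obtain ⟨b, rfl⟩ := QuotientGroup.mk_surjective y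
    rw [← QuotientGroup.mk_mul, ← QuotientGroup.mk_mul]
    refine QuotientGroup.eq.mpr ?_
    have h := hcomm b⁻¹ a⁻¹
    have e : (a * b)⁻¹ * (b * a) = ⁅b⁻¹, a⁻¹⁆ := by
      rw [commutatorElement_def]; group
    rw [e]; exact h
  -- `H` is not abelian
  have hna : ¬ ∀ a b : H, a * b = b * a := by
    intro h
    have ht : Subgroup.center H = ⊤ := by
      rw [eq_top_iff]
      intro a _
      exact Subgroup.mem_center_iff.mpr fun g => h g a
    rw [ht, Subgroup.card_top, hcard] at hcenter
    have h1 : p ^ (2 * n + 1) = p ^ 1 := by rw [hcenter, pow_one]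
    have := Nat.pow_right_injective hp.two_le h1
    omega
  -- lifts of some pair do not commute
  have hz : ∀ a : H, ∃ z ∈ Subgroup.center H, u (QuotientGroup.mk a) * z = a := by
    intro a
    exact ⟨(u (QuotientGroup.mk a))⁻¹ * a, QuotientGroup.eq.mp (hu _), by group⟩
  obtain ⟨x, y, hxy⟩ : ∃ x y : H ⧸ Subgroup.center H, u x * u y ≠ u y * u x := by
    by_contra! hall
    apply hna
    intro a b
    obtain ⟨z, hzc, hza⟩ := hz a
    obtain ⟨w, hwc, hwb⟩ := hz b
    have hzz := Subgroup.mem_center_iff.mp hzc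
    have hww := Subgroup.mem_center_iff.mp hwc
    have hc : Commute (u (QuotientGroup.mk a) * z) (u (QuotientGroup.mk b) * w) :=
      Commute.mul_left (Commute.mul_right (hall _ _) (hww _))
        (Commute.mul_right (hzz _).symm (hww _))
    rw [hza, hwb] at hc
    exact hc
  have hk : kf x y ≠ kf y x := by
    intro h
    have h' := congrArg (Subtype.val) h
    rw [hkf, hkf, hcq y x] at h'
    exact hxy (mul_right_cancel h')
  letI : CommGroup (Subgroup.center H) :=
    { (inferInstance : Group (Subgroup.center H)) with
      mul_comm := fun a b => Subtype.ext (Subgroup.mem_center_iff.mp b.2 a) }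
  obtain ⟨ρ, hρ⟩ : ∃ ρ : Subgroup.center H →* ℂˣ, ρ (kf x y / kf y x) ≠ 1 :=
    CommGroup.exists_apply_ne_one_of_hasEnoughRootsOfUnity _ ℂ (div_ne_one.mpr hk)
  apply hρ
  rw [map_div, div_eq_one]
  -- alternating product of `ω` over permutations of `(a, b, c)`
  have key : ∀ a b c : (Subgroup.center H →* ℂˣ) × (H ⧸ Subgroup.center H),
      ω a b c * ω b c a * ω c a b = ω a c b * ω c b a * ω b a c := by
    intro a b c
    have hG : ∀ a b : (Subgroup.center H →* ℂˣ) × (H ⧸ Subgroup.center H),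
        a * b = b * a := fun a b => Prod.ext (MonoidHom.ext fun z => mul_comm (a.1 z) (b.1 z)) (hcq _ _)
    simp only [hβ]
    rw [hG c b, hG c a, hG b a]
    generalize β a b = t1
    generalize β b a = t2
    generalize β b c = t3
    generalize β c b = t4
    generalize β a c = t5
    generalize β c a = t6
    generalize β a (b * c) = t7
    generalize β (b * c) a = t8
    generalize β (a * b) c = t9
    generalize β c (a * b) = t10
    generalize β (a * c) b = t11
    generalize β b (a * c) = t12
    apply Units.ext
    push_cast
    field_simp
  have := key (ρ, 1) (1, x) (1, y)
  simpa [hω] using this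
end

section
/- Let p be a prime and H a finite group such that the center Z(H) has order exactly p, every commutator ⁅a,b⁆ (a,b ∈ H) lies in Z(H), and h^p ∈ Z(H) for every h ∈ H (so that H/Z(H) is elementary abelian). Then there exists n ∈ ℕ such that the order of H equals p^{2n+1}; that is, any extra-special p-group has order p^{2n+1} for some n. -/
open scoped commutatorElement

/-- The commutator homomorphism `h ↦ ⁅h, x⁆` into the center. -/
def commHomAux {H : Type} [Group H] (hcomm : ∀ a b : H, ⁅a, b⁆ ∈ Subgroup.center H) (x : H) :
    H →* Subgroup.center H where
  toFun h := ⟨⁅h, x⁆, hcomm h x⟩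
  map_one' := by
    apply Subtype.ext
    simp
  map_mul' a b := by
    apply Subtype.ext
    have h := Subgroup.mem_center_iff.1 (hcomm b x)
    calc ⁅a * b, x⁆ = (a * ⁅b, x⁆) * (x * a⁻¹ * x⁻¹) := by
          simp only [commutatorElement_def]; group
      _ = ⁅b, x⁆ * ⁅a, x⁆ := by
          rw [h a]; simp only [commutatorElement_def]; group
      _ = ⁅a, x⁆ * ⁅b, x⁆ := (h _).symm

theorem extraspecial_aux (p : ℕ) (hp : p.Prime) (N : ℕ) : ∀ (H : Type) [Group H] [Finite H],
    Nat.card H = N → Nat.card (Subgroup.center H) = p →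
    (∀ a b : H, ⁅a, b⁆ ∈ Subgroup.center H) →
    ∃ n : ℕ, Nat.card H = p ^ (2 * n + 1) := by
  induction N using Nat.strong_induction_on with
  | _ N ih =>
  intro H _ _ hN hcenter hcomm
  by_cases hab : ∀ x y : H, ⁅x, y⁆ = 1
  · refine ⟨0, ?_⟩
    have : Subgroup.center H = ⊤ := by
      rw [eq_top_iff]
      intro x _
      rw [Subgroup.mem_center_iff]
      intro g
      exact commutatorElement_eq_one_iff_mul_comm.1 (hab g x)
    rw [this, Subgroup.card_top] at hcenter
    simpa using hcenter
  push Not at hab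
  obtain ⟨x, y, hxy⟩ := hab
  have : Fact p.Prime := ⟨hp⟩
  let φ : H →* Subgroup.center H × Subgroup.center H :=
    (commHomAux hcomm x).prod (commHomAux hcomm y)
  have hyx : ⁅y, x⁆ ≠ 1 := by
    intro h
    apply hxy
    rw [← commutatorElement_inv, h, inv_one]
  have hφx : φ x = (1, ⟨⁅x, y⁆, hcomm x y⟩) := by
    refine Prod.ext (Subtype.ext ?_) rfl
    exact commutatorElement_self x
  have hφy : φ y = (⟨⁅y, x⁆, hcomm y x⟩, 1) := by
    refine Prod.ext rfl (Subtype.ext ?_)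
    exact commutatorElement_self y
  have key : ∀ z : Subgroup.center H × Subgroup.center H, ∃ i j : ℤ, φ (x ^ i * y ^ j) = z := by
    rintro ⟨a, b⟩
    have h1 : a ∈ Subgroup.zpowers (⟨⁅y, x⁆, hcomm y x⟩ : Subgroup.center H) :=
      mem_zpowers_of_prime_card hcenter (fun h => hyx (congrArg Subtype.val h))
    have h2 : b ∈ Subgroup.zpowers (⟨⁅x, y⁆, hcomm x y⟩ : Subgroup.center H) :=
      mem_zpowers_of_prime_card hcenter (fun h => hxy (congrArg Subtype.val h))
    obtain ⟨j, hj⟩ := h1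
    obtain ⟨i, hi⟩ := h2
    refine ⟨i, j, ?_⟩
    rw [map_mul, map_zpow, map_zpow, hφx, hφy, Prod.pow_mk, Prod.pow_mk, Prod.mk_mul_mk]
    simp only [one_zpow, one_mul, mul_one]
    exact Prod.ext hj hi
  have hsurj : Function.Surjective φ := fun z => by
    obtain ⟨i, j, h⟩ := key z
    exact ⟨_, h⟩
  have hker : ∀ k : H, k ∈ φ.ker ↔ k * x = x * k ∧ k * y = y * k := by
    intro k
    rw [MonoidHom.mem_ker, Prod.ext_iff, Subtype.ext_iff, Subtype.ext_iff]
    exact and_congr commutatorElement_eq_one_iff_mul_comm commutatorElement_eq_one_iff_mul_comm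
  have hcard : Nat.card H = p * p * Nat.card φ.ker := by
    rw [Subgroup.card_eq_card_quotient_mul_card_subgroup φ.ker,
      Nat.card_congr (QuotientGroup.quotientKerEquivOfSurjective φ hsurj).toEquiv,
      Nat.card_prod, hcenter]
  have hle : ∀ z ∈ Subgroup.center H, z ∈ φ.ker := fun z hz =>
    (hker z).2 ⟨(Subgroup.mem_center_iff.1 hz x).symm, (Subgroup.mem_center_iff.1 hz y).symm⟩
  have hmap : (Subgroup.center φ.ker).map φ.ker.subtype = Subgroup.center H := by
    ext z
    constructor
    · rintro ⟨k, hk, rfl⟩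
      rw [Subgroup.mem_center_iff]
      intro g
      obtain ⟨i, j, hij⟩ := key (φ g)
      have hm : (x ^ i * y ^ j)⁻¹ * g ∈ φ.ker := by
        rw [MonoidHom.mem_ker, map_mul, map_inv, hij, inv_mul_cancel]
      have hc : Commute ((x ^ i * y ^ j)⁻¹ * g) (k : H) :=
        congrArg Subtype.val (Subgroup.mem_center_iff.1 hk ⟨_, hm⟩)
      obtain ⟨hkx, hky⟩ := (hker k).1 k.2
      have hx : Commute x (k : H) := hkx.symm
      have hy : Commute y (k : H) := hky.symm
      have := ((hx.zpow_left i).mul_left (hy.zpow_left j)).mul_left hc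
      rw [mul_inv_cancel_left] at this
      exact this
    · intro hz
      refine ⟨⟨z, hle z hz⟩, ?_, rfl⟩
      apply Subgroup.mem_center_iff.2
      intro g
      exact Subtype.ext (Subgroup.mem_center_iff.1 hz g)
  have hcz : Nat.card (Subgroup.center φ.ker) = p := by
    have h1 : Nat.card ((Subgroup.center φ.ker).map φ.ker.subtype) = Nat.card (Subgroup.center H) :=
      congrArg (fun S : Subgroup H => Nat.card S) hmap
    rw [Subgroup.card_map_of_injective φ.ker.subtype_injective] at h1
    exact h1.trans hcenter
  have hpos : 0 < Nat.card φ.ker := Nat.card_pos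
  have hlt : Nat.card φ.ker < N := by
    rw [← hN, hcard]
    have := hp.two_le
    nlinarith [Nat.mul_le_mul this this]
  obtain ⟨n, hn⟩ := ih _ hlt φ.ker rfl hcz (by
    intro a b
    apply Subgroup.mem_center_iff.2
    intro g
    exact Subtype.ext (Subgroup.mem_center_iff.1 (hcomm (a : H) b) g))
  refine ⟨n + 1, ?_⟩
  rw [hcard, hn]
  ring

/-- Any extra-special `p`-group has order `p^(2n+1)` for some `n`: if `H` is a finite
group whose center has order exactly `p`, in which every commutator is central and
`h ^ p` is central for every `h` (so `H ⧸ Z(H)` is elementary abelian), then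
`|H| = p^(2n+1)` for some `n ∈ ℕ`. -/
theorem statement8 (p : ℕ) (hp : p.Prime) {H : Type} [Group H] [Finite H]
    (hcenter : Nat.card (Subgroup.center H) = p)
    (hcomm : ∀ a b : H, ⁅a, b⁆ ∈ Subgroup.center H)
    (hpow : ∀ h : H, h ^ p ∈ Subgroup.center H) :
    ∃ n : ℕ, Nat.card H = p ^ (2 * n + 1) :=
  extraspecial_aux p hp _ H rfl hcenter hcomm
end

section
/- Let p be a prime, n ≥ 1, and let G be the elementary abelian group (ℤ/p)^n (written multiplicatively, e.g. G = Multiplicative (Fin n → ZMod p)). Then for every degree k ≥ 1, the group cohomology H^k(G; ℤ) with trivial G-action on ℤ is annihilated by p: for every x ∈ groupCohomology (Rep.trivial ℤ G ℤ) k one has p • x = 0. In particular the map on H^k(G; ℤ) induced by multiplication by p on the coefficients ℤ is the zero map in all positive degrees. -/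
namespace S9

open Finset

variable {G : Type} [CommGroup G]

/-- Successive differences of a sequence. -/
def df (k : ℕ) (y : ℕ → G) : Fin k → G := fun i => (y i)⁻¹ * y (i + 1)

/-- Omit the `j`-th entry. -/
def fc (j : ℕ) (y : ℕ → G) : ℕ → G := fun l => if l < j then y l else y (l + 1)

/-- Prism operator. -/
def pr (a b : G → G) (i : ℕ) (y : ℕ → G) : ℕ → G :=
  fun l => if l ≤ i then a (y l) else b (y (l - 1))

/-- Partial products. -/
def pp {k : ℕ} (g : Fin k → G) : ℕ → G :=
  fun n => ∏ i ∈ range n, if h : i < k then g ⟨i, h⟩ else 1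

lemma df_pp {k : ℕ} (g : Fin k → G) : df k (pp g) = g := by
  funext i
  simp [df, pp, prod_range_succ]

lemma pp_df {k : ℕ} (y : ℕ → G) (l : ℕ) (hl : l ≤ k) : pp (df k y) l = (y 0)⁻¹ * y l := by
  induction l with
  | zero => simp [pp]
  | succ l ih =>
    have h1 : pp (df k y) (l + 1) = pp (df k y) l * ((y l)⁻¹ * y (l + 1)) := by
      have : l < k := hl
      simp [pp, prod_range_succ, this, df]
    rw [h1, ih (by omega)]
    group

lemma prism_sum (t u : ℕ → ℕ → ℤ) (M : ℕ → ℤ)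
    (h1 : ∀ i j, j ≤ i → t (i + 1) j = u i j)
    (h2 : ∀ i, t i i = M i) (h3 : ∀ i, t i (i + 1) = M (i + 1))
    (h4 : ∀ i j, i + 1 ≤ j → t i (j + 1) = u i j) (N : ℕ) :
    ∑ i ∈ range (N + 1), ∑ j ∈ range (N + 2), (-1) ^ (i + j) * t i j =
      M 0 - M (N + 1) - ∑ i ∈ range N, ∑ j ∈ range (N + 1), (-1) ^ (i + j) * u i j := by
  induction N with
  | zero =>
    have := h2 0
    have := h3 0
    simp [sum_range_succ, *]
    ring
  | succ N ih =>
    rw [sum_range_succ]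
    have e1 : ∑ i ∈ range (N + 1), ∑ j ∈ range (N + 1 + 2), (-1 : ℤ) ^ (i + j) * t i j =
      ∑ i ∈ range (N + 1), ∑ j ∈ range (N + 2), (-1) ^ (i + j) * t i j
       - ∑ i ∈ range N, (-1) ^ (i + (N + 1)) * u i (N + 1)
       - (-1) ^ (N + (N + 1)) * u N (N + 1) := by
      rw [sub_sub, ← sum_range_succ (fun i => (-1 : ℤ) ^ (i + (N + 1)) * u i (N + 1)),
        ← sum_sub_distrib]
      refine sum_congr rfl fun i hi => ?_
      rw [sum_range_succ _ (N + 2), h4 i (N + 1) (by simp at hi; omega)]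
      ring
    have e2 : ∑ j ∈ range (N + 1 + 2), (-1 : ℤ) ^ (N + 1 + j) * t (N + 1) j =
      - ∑ j ∈ range (N + 1), (-1 : ℤ) ^ (N + j) * u N j + M (N + 1) - M (N + 2) := by
      rw [sum_range_succ, sum_range_succ, h2, h3, ← sum_neg_distrib]
      have : ∑ j ∈ range (N + 1), (-1 : ℤ) ^ (N + 1 + j) * t (N + 1) j =
          ∑ j ∈ range (N + 1), -((-1 : ℤ) ^ (N + j) * u N j) := by
        refine sum_congr rfl fun j hj => ?_
        rw [h1 N j (by simp at hj; omega)]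
        ring
      rw [this]
      have p1 : (-1 : ℤ) ^ (N + 1 + (N + 1)) = 1 := Even.neg_one_pow ⟨N + 1, rfl⟩
      have p2 : (-1 : ℤ) ^ (N + 1 + (N + 1 + 1)) = -1 := Odd.neg_one_pow ⟨N + 1, by ring⟩
      rw [p1, p2]
      ring
    have e3 : ∑ i ∈ range (N + 1), ∑ j ∈ range (N + 1 + 1), (-1 : ℤ) ^ (i + j) * u i j =
      ∑ i ∈ range N, ∑ j ∈ range (N + 1), (-1 : ℤ) ^ (i + j) * u i j
       + ∑ i ∈ range N, (-1) ^ (i + (N + 1)) * u i (N + 1)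
       + ∑ j ∈ range (N + 1), (-1 : ℤ) ^ (N + j) * u N j
       + (-1) ^ (N + (N + 1)) * u N (N + 1) := by
      rw [sum_range_succ, ← sum_add_distrib, sum_range_succ _ (N + 1)]
      simp only [sum_range_succ _ (N + 1)]
      ring
    rw [e1, e2, e3, ih]
    ring

/-- homogeneous coboundary -/
def dl (k : ℕ) (h : (Fin k → G) → ℤ) (y : ℕ → G) : ℤ :=
  ∑ j ∈ range (k + 2), (-1) ^ j * h (df k (fc j y))

/-- being a coboundary -/
def Cob (m : ℕ) (Φ : (ℕ → G) → ℤ) : Prop :=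
  ∃ h : (Fin m → G) → ℤ, ∀ y, Φ y = dl m h y

lemma Cob.add {m : ℕ} {Φ Ψ : (ℕ → G) → ℤ} (h1 : Cob m Φ) (h2 : Cob m Ψ) :
    Cob m (fun y => Φ y + Ψ y) := by
  obtain ⟨a, ha⟩ := h1
  obtain ⟨b, hb⟩ := h2
  refine ⟨fun g => a g + b g, fun y => ?_⟩
  dsimp only
  rw [ha, hb, dl, dl, dl, ← sum_add_distrib]
  exact sum_congr rfl fun _ _ => by ring

lemma prism {m : ℕ} (f : (Fin (m + 1) → G) → ℤ) (hf : ∀ y, dl (m + 1) f y = 0)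
    (a b : G → G) (x : ℕ → G) :
    ∑ j ∈ range (m + 2), (-1) ^ j * ∑ i ∈ range (m + 1), (-1) ^ i *
      f (df (m + 1) (pr a b i (fc j x)))
     = f (df (m + 1) (fun l => b (x l))) - f (df (m + 1) (fun l => a (x l))) := by
  have key := prism_sum (fun i j => f (df (m + 1) (fc j (pr a b i x))))
    (fun i j => f (df (m + 1) (pr a b i (fc j x))))
    (fun i => f (df (m + 1) (fun l => if l < i then a (x l) else b (x l))))
    (by
      intro i j hij
      congr 2
      funext l
      simp only [fc, pr]
      rcases Nat.lt_or_ge l j with h | h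
      · simp [h, show l ≤ i + 1 by omega, show l ≤ i by omega]
      · rcases Nat.lt_or_ge i l with h' | h'
        · obtain ⟨l, rfl⟩ : ∃ l', l = l' + 1 := ⟨l - 1, by omega⟩
          simp [show ¬ l + 1 < j by omega, show ¬ l + 1 ≤ i by omega,
            show ¬ l < j by omega]
        · simp [show ¬ l < j by omega, h'])
    (by
      intro i
      congr 2
      funext l
      simp only [fc, pr]
      rcases Nat.lt_or_ge l i with h | h
      · simp [h, h.le]
      · simp [show ¬ l < i by omega, show ¬ l + 1 ≤ i by omega])
    (by
      intro i
      congr 2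
      funext l
      simp only [fc, pr]
      rcases Nat.lt_or_ge l (i + 1) with h | h
      · simp [h, show l ≤ i by omega]
      · simp [show ¬ l < i + 1 by omega, show ¬ l + 1 ≤ i by omega])
    (by
      intro i j hij
      congr 2
      funext l
      simp only [fc, pr]
      rcases Nat.lt_or_ge i l with h | h
      · obtain ⟨l, rfl⟩ : ∃ l', l = l' + 1 := ⟨l - 1, by omega⟩
        by_cases h' : l < j
        · simp [h', show ¬ l + 1 ≤ i by omega]
        · simp [h', show ¬ l + 1 ≤ i by omega, show ¬ l + 1 + 1 ≤ i by omega]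
      · simp [h, show l < j + 1 by omega, show l < j by omega])
    (m + 1)
  have z : ∑ i ∈ range (m + 1 + 1), ∑ j ∈ range (m + 1 + 2), (-1 : ℤ) ^ (i + j) *
      f (df (m + 1) (fc j (pr a b i x))) = 0 := by
    refine sum_eq_zero fun i _ => ?_
    have := hf (pr a b i x)
    rw [dl] at this
    simp only [pow_add, mul_assoc]
    rw [← mul_sum, this, mul_zero]
  rw [z] at key
  have q1 : df (m + 1) (fun l => if l < m + 1 + 1 then a (x l) else b (x l))
      = df (m + 1) (fun l => a (x l)) := by
    funext i
    have := i.2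
    simp only [df, if_pos (show (i : ℕ) < m + 1 + 1 by omega),
      if_pos (show (i : ℕ) + 1 < m + 1 + 1 by omega)]
  rw [q1] at key
  simp only [not_lt_zero, if_false] at key
  have q2 : ∑ i ∈ range (m + 1), ∑ j ∈ range (m + 1 + 1), (-1 : ℤ) ^ (i + j) *
      f (df (m + 1) (pr a b i (fc j x))) = ∑ j ∈ range (m + 2), (-1) ^ j *
      ∑ i ∈ range (m + 1), (-1) ^ i * f (df (m + 1) (pr a b i (fc j x))) := by
    rw [sum_comm]
    refine sum_congr rfl fun j _ => ?_
    rw [mul_sum]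
    refine sum_congr rfl fun i _ => ?_
    ring
  rw [q2] at key
  linarith

lemma step {m : ℕ} (f : (Fin (m + 1) → G) → ℤ) (hf : ∀ y, dl (m + 1) f y = 0)
    (a b : G →* G) (S : Type) [Group S] [Fintype S] (c : S →* G)
    (hc : ∀ g, ∃ s, a g = c s * b g) :
    Cob m (fun y => (Fintype.card S : ℤ) *
      (f (df (m + 1) (fun l => b (y l))) - f (df (m + 1) (fun l => a (y l))))) := by
  let H : (ℕ → G) → ℤ := fun y => ∑ s : S, ∑ i ∈ range (m + 1), (-1) ^ i *
      f (df (m + 1) (pr (fun g => c s * a g) b i y))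
  have hH : ∀ y, H y = H (pp (df m y)) := by
    intro y
    obtain ⟨s₀, hs₀⟩ := hc (y 0)
    refine Fintype.sum_equiv (Equiv.mulRight s₀) _ _ fun s => ?_
    refine sum_congr rfl fun i hi => ?_
    simp only [mem_range] at hi
    congr 2
    -- the right side is the left side times `(b (y 0))⁻¹`
    have e : ∀ l, l ≤ m + 1 → pr (fun g => c (s * s₀) * a g) b i (pp (df m y)) l =
        (b (y 0))⁻¹ * pr (fun g => c s * a g) b i y l := by
      intro l hl
      simp only [pr]
      by_cases h : l ≤ i
      · rw [if_pos h, if_pos h, pp_df y l (by omega), map_mul, map_mul, map_inv, hs₀]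
        simp only [mul_inv]
        have : c s₀ * (c s₀)⁻¹ = 1 := mul_inv_cancel _
        calc _ = (c s₀ * (c s₀)⁻¹) * ((b (y 0))⁻¹ * (c s * a (y l))) := by
              ac_rfl
          _ = _ := by rw [this, one_mul]
      · rw [if_neg h, if_neg h, pp_df y (l - 1) (by omega), map_mul, map_inv]
    funext j
    have := j.2
    simp only [df, Equiv.coe_mulRight]
    rw [e j (by omega), e (j + 1) (by omega)]
    group
  refine ⟨fun g => H (pp g), fun y => ?_⟩
  simp only [dl, ← hH]
  have : ∀ s : S, f (df (m + 1) (fun l => b (y l))) - f (df (m + 1) (fun l => a (y l)))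
      = ∑ j ∈ range (m + 2), (-1) ^ j * ∑ i ∈ range (m + 1), (-1) ^ i *
      f (df (m + 1) (pr (fun g => c s * a g) b i (fc j y))) := by
    intro s
    rw [prism f hf]
    have q : df (m + 1) (fun l => a (y l)) = df (m + 1) (fun l => c s * a (y l)) := by
      funext j
      simp only [df, mul_inv]
      rw [mul_mul_mul_comm, inv_mul_cancel, one_mul]
    rw [q]
  simp only [H]
  rw [sum_congr rfl fun j _ => mul_sum _ _ _, sum_comm, ← sum_congr rfl fun s _ => this s]
  simp [mul_sub]

lemma const_cob {m : ℕ} (f : (Fin (m + 1) → G) → ℤ) (hf : ∀ y, dl (m + 1) f y = 0) (q : ℤ) :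
    Cob m (fun _ : ℕ → G => q * f (df (m + 1) (fun _ => (1 : G)))) := by
  have h := hf (fun _ => 1)
  have e : ∀ j, fc j (fun _ => (1 : G)) = fun _ => 1 := by intro j; funext l; simp [fc]
  simp only [dl, e, ← sum_mul] at h
  refine ⟨fun _ => q * f (df (m + 1) (fun _ => (1 : G))), fun y => ?_⟩
  simp only [dl, ← sum_mul]
  rw [sum_range_succ] at h
  have g1 := neg_one_geom_sum (R := ℤ) (n := m + 2)
  rw [g1] at h ⊢
  rcases Nat.even_or_odd (m + 2) with h3 | h3
  · rw [if_pos h3, h3.neg_one_pow] at h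
    have h5 : f (df (m + 1) (fun _ => (1 : G))) = 0 := by linarith
    simp [h5]
  · rw [if_neg (Nat.not_even_iff_odd.2 h3)]
    simp

end S9

open S9 in
lemma S9.main (p n : ℕ) [NeZero p] (m : ℕ)
    (f : (Fin (m + 1) → Multiplicative (Fin n → ZMod p)) → ℤ)
    (hf : ∀ y, dl (m + 1) f y = 0) :
    Cob m (fun y => (p : ℤ) * f (df (m + 1) y)) := by
  let e : ℕ → (Multiplicative (Fin n → ZMod p) →* Multiplicative (Fin n → ZMod p)) := fun r =>
    AddMonoidHom.toMultiplicative
      { toFun := fun v i => if (i : ℕ) < r then v i else 0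
        map_zero' := by ext; simp
        map_add' := by intro v w; ext i; by_cases h : (i : ℕ) < r <;> simp [h] }
  have ind : ∀ r ≤ n, Cob m (fun y => (p : ℤ) * f (df (m + 1) (fun l => e r (y l)))) := by
    intro r hr
    induction r with
    | zero =>
      have : ∀ x, e 0 x = 1 := by
        intro x
        apply Multiplicative.toAdd.injective
        ext i
        simp [e]
      simp only [this]
      exact const_cob f hf p
    | succ r ih =>
      have h1 := ih (by omega)
      have h2 := step f hf (e r) (e (r + 1)) (Multiplicative (ZMod p))
        (AddMonoidHom.toMultiplicative (AddMonoidHom.single (fun _ : Fin n => ZMod p) ⟨r, hr⟩))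
        (by
          intro g
          refine ⟨Multiplicative.ofAdd (- g.toAdd ⟨r, hr⟩), ?_⟩
          apply Multiplicative.toAdd.injective
          ext i
          by_cases hi : i = ⟨r, hr⟩
          · subst hi
            simp [e]
          · have : (i : ℕ) ≠ r := fun h => hi (Fin.ext h)
            have h3 : (i : ℕ) ≤ r ↔ (i : ℕ) < r := by omega
            simp [e, hi, h3])
      have h3 := h1.add h2
      convert h3 using 2 with y
      simp
      ring
  convert ind n le_rfl using 6 with y l
  apply Multiplicative.toAdd.injective
  ext i
  simp [e]

open S9 in
lemma S9.d_apply {G : Type} [CommGroup G] (k : ℕ) (f : (Fin k → G) → ℤ) (y : ℕ → G) :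
    (inhomogeneousCochains.d (Rep.trivial ℤ G ℤ) k).hom f (df (k + 1) y) = dl k f y := by
  rw [inhomogeneousCochains.d_hom_apply, dl, Finset.sum_range_succ', add_comm,
    Finset.sum_range]
  congr 1
  · refine Finset.sum_congr rfl fun j _ => ?_
    rw [smul_eq_mul]
    congr 2
    funext i
    rcases lt_trichotomy (i : ℕ) j with h | h | h
    · rw [Fin.contractNth_apply_of_lt _ _ _ _ h]
      simp [df, fc, h, show (i : ℕ) < j + 1 by omega]
    · rw [Fin.contractNth_apply_of_eq _ _ _ _ h]
      simp [df, fc, h]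
    · rw [Fin.contractNth_apply_of_gt _ _ _ _ h]
      simp [df, fc, show ¬ (i : ℕ) < j + 1 by omega, show ¬ (i : ℕ) < j by omega]
  · simp
    congr 1

/-- For a prime `p`, `n ≥ 1`, and the elementary abelian group
`G = (ℤ/p)^n` (written multiplicatively), the group cohomology `H^k(G; ℤ)` with
trivial coefficients is annihilated by `p` in every positive degree `k ≥ 1`:
`p • x = 0` for every class `x`.  In particular multiplication by `p` on the
coefficients induces the zero map on `H^k(BG; ℤ)` for `k ≥ 1`. -/
theorem statement9 (p n : ℕ) (hp : p.Prime) (hn : 1 ≤ n) (k : ℕ) (hk : 1 ≤ k)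
    (x : groupCohomology
      (Rep.trivial ℤ (Multiplicative (Fin n → ZMod p)) ℤ) k) :
    p • x = 0 := by
  have : NeZero p := ⟨hp.ne_zero⟩
  obtain ⟨m, rfl⟩ : ∃ m, k = m + 1 := ⟨k - 1, by omega⟩
  induction x using groupCohomology_induction_on with
  | h z =>
  let A := Rep.trivial ℤ (Multiplicative (Fin n → ZMod p)) ℤ
  let f : (Fin (m + 1) → Multiplicative (Fin n → ZMod p)) → ℤ :=
    groupCohomology.iCocycles A (m + 1) z
  have hf0 : (inhomogeneousCochains.d A (m + 1)).hom f = 0 := by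
    have h := (groupCohomology.inhomogeneousCochains A).iCycles_d (m + 1) (m + 2)
    rw [groupCohomology.inhomogeneousCochains.d_def] at h
    exact congrArg (fun φ => φ.hom z) h
  obtain ⟨h, hh⟩ := S9.main p n m f (fun y => by
    rw [← S9.d_apply, hf0]; rfl)
  have hz : p • z = groupCohomology.toCocycles A m (m + 1) h := by
    apply (ModuleCat.mono_iff_injective (groupCohomology.iCocycles A (m + 1))).1 inferInstance
    have h2 := (groupCohomology.inhomogeneousCochains A).toCycles_i m (m + 1)
    rw [groupCohomology.inhomogeneousCochains.d_def] at h2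
    have h3 := congrArg (fun φ => φ.hom h) h2
    refine Eq.trans ?_ h3.symm
    rw [map_nsmul]
    change p • f = (inhomogeneousCochains.d A m).hom h
    funext g
    rw [← S9.df_pp g, S9.d_apply, ← hh]
    simp
  rw [← map_nsmul, hz]
  have h4 := (groupCohomology.inhomogeneousCochains A).toCycles_comp_homologyπ m (m + 1)
  exact congrArg (fun φ => φ.hom h) h4
end
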